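/- For n qudits of prime dimension p and every w ≥ 1, the group D_w equals the set C^w_d of diagonal gates in the w-th level of the Clifford hierarchy. -/

import Mathlib

/-!
Up to a global phase, a diagonal gate is `|j⟩ ↦ exp(2πi g(j))|j⟩` for a real function `g` on
`(ZMod p)^n`, determined modulo `ℤ`. Conjugating a translation by such a gate multiplies it by the
phases of a difference of `g`, so each level of the hierarchy removes one difference. Hence the gate
lies in level `w` exactly when all `(w + 1)`-fold differences of `g` are integral, i.e. when `g` is
a non-classical polynomial of degree `≤ w`. This is `mem_cliffDN_iff`, deduced from
`phaseMat_mem_cliff_iff`, which treats a translation followed by phases so that the induction on the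
level closes up. The degree is encoded by `DegLT`: `g` pairs integrally with a power of the
augmentation ideal of the group ring `ℤ[(ZMod p)^n]`.

It remains to show that `D_w` consists of the gates whose phase function has degree `≤ w`
(`Dw_eq_degGates`).

* The function `∏ C(|x_i|, b_i) / p^m` has degree at most `(p - 1)(m - 1) + |b|`
  (`degLT_binomFn`). Its differences are given by Pascal's rule, with a correction where `|x_i|` wraps
  around from `p - 1` to `0`; that correction is divisible by `p`, so it lowers `m`. Monomials are
  integral combinations of such binomials (`degLT_monoFn`), and this bounds the degree on every
  `D_{m,a}` (`dgrpN_subset_degGates`).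
* Conversely, write `D_i = T_i - 1` for the difference operators. Newton's expansion of
  `T^x = ∏ (1 + D_i)^{|x_i|}` expresses `g` through the binomials `∏ C(|x_i|, b_i)`, with the pairings
  of `g` with `D^b` as coefficients. Since `T_i^p = 1`, the element `p D_i` is a multiple of `D_i^p`
  (`diffElt_pow_dvd`), so multiplication by `p` raises the augmentation filtration by `p - 1`
  (`p_pow_mul_mem`), which bounds the denominators of these coefficients (`DegLT.expansion`). The
  factorials `b_i!` are prime to `p`, so one can pass from binomials to monomials, and `g` becomes the
  phase of a product of gates `U_{m,b}` with `(p - 1)(m - 1) + wt(b) ≤ w` (`phaseMat_mem_of_degLT`).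
* The generators of weight smaller than `w` lie in `D_w` because `D_w ⊆ D_{w+1}` (`Dw_subset_succ`).
-/

open Matrix Complex

/-- Shift gate `X` acting on the `i`-th of `n` qudits: `X(e_i)|j⟩ = |j + e_i⟩`. -/
noncomputable def XmatN (p n : ℕ) [NeZero p] (i : Fin n) :
    Matrix (Fin n → ZMod p) (Fin n → ZMod p) ℂ :=
  Matrix.of fun r c => if r = Function.update c i (c i + 1) then 1 else 0

/-- Phase gate `Z` acting on the `i`-th of `n` qudits: `Z(e_i)|j⟩ = ω^{j_i}|j⟩`. -/
noncomputable def ZmatN (p n : ℕ) [NeZero p] (i : Fin n) :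
    Matrix (Fin n → ZMod p) (Fin n → ZMod p) ℂ :=
  Matrix.of fun r c =>
    if r = c then Complex.exp (2 * Real.pi * Complex.I * (((c i).val : ℂ) / (p : ℂ))) else 0

/-- The phase of the Pauli group generators: `i` if `p = 2`, `ω = exp(2πi/p)` if `p > 2`. -/
noncomputable def pauliPhase (p : ℕ) : ℂ :=
  if p = 2 then Complex.I else Complex.exp (2 * Real.pi * Complex.I / (p : ℂ))

/-- The `n`-qudit Pauli group `P_n = P^{⊗n}`, generated by the phase `iI` (`p = 2`) or
`ωI` (`p > 2`) together with `X` and `Z` acting on each qudit.  All generators have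
finite order, so the monoid they generate is already a group. -/
noncomputable def PauliN (p n : ℕ) [NeZero p] :
    Set (Matrix (Fin n → ZMod p) (Fin n → ZMod p) ℂ) :=
  ↑(Submonoid.closure
      ({pauliPhase p • (1 : Matrix (Fin n → ZMod p) (Fin n → ZMod p) ℂ)} ∪
        (Set.range (XmatN p n)) ∪ (Set.range (ZmatN p n))))

/-- The Clifford hierarchy on `n` qudits:
`C^1 = {e^{iφ} P : P ∈ P_n}`, and `C^k = {U unitary | U P U† ∈ C^{k-1} ∀ P ∈ P_n}` for `k ≥ 2`. -/
noncomputable def CliffN (p n : ℕ) [NeZero p] :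
    ℕ → Set (Matrix (Fin n → ZMod p) (Fin n → ZMod p) ℂ)
  | 0 => ∅
  | 1 => {U | ∃ φ : ℝ, ∃ P ∈ PauliN p n, U = Complex.exp (φ * Complex.I) • P}
  | (k + 2) => {U | U ∈ Matrix.unitaryGroup (Fin n → ZMod p) ℂ ∧
      ∀ P ∈ PauliN p n, U * P * Uᴴ ∈ CliffN p n (k + 1)}

/-- The diagonal gates in the `k`-th level of the `n`-qudit Clifford hierarchy. -/
noncomputable def CliffDN (p n : ℕ) [NeZero p] (k : ℕ) :
    Set (Matrix (Fin n → ZMod p) (Fin n → ZMod p) ℂ) :=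
  {U | U ∈ CliffN p n k ∧ U.IsDiag}

/-- The gate `U_{m,a} = Σ_j exp(2πi j_1^{a_1}⋯j_n^{a_n} / p^m)|j⟩⟨j|`, powers computed
with the integer representatives `0 ≤ j_i ≤ p-1`. -/
noncomputable def UmaN (p n : ℕ) [NeZero p] (m : ℕ) (a : Fin n → ℕ) :
    Matrix (Fin n → ZMod p) (Fin n → ZMod p) ℂ :=
  Matrix.of fun r c =>
    if r = c then
      Complex.exp (2 * Real.pi * Complex.I * ((∏ i, ((r i).val : ℂ) ^ (a i)) / (p : ℂ) ^ m))
    else 0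

/-- The group `D_{m,a} = ⟨U_{m,a}⟩ ⬝ {e^{iφ}I} ⬝ ∏_b D_{m,b} ⬝ ∏_c D_{m-1,c}`, where `b`
ranges over vectors with `b_i ≤ a_i` for all `i` and `wt(b) < wt(a)`, and `c` ranges over
vectors with `1 ≤ c_i ≤ p-1` and `wt(c) ≤ wt(a) + (p-1)`; `D_{0,·} = {e^{iφ}I}`.
The products of these commuting groups of diagonal gates are expressed as the monoids
they generate (all factors are groups, so these products are groups). -/
noncomputable def DgrpN (p n : ℕ) [NeZero p] :
    ℕ → (Fin n → ℕ) → Set (Matrix (Fin n → ZMod p) (Fin n → ZMod p) ℂ)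
  | 0, _ => {U | ∃ φ : ℝ, U = Complex.exp (φ * Complex.I) • 1}
  | (m + 1), a =>
    {W | ∃ G ∈ Submonoid.closure {UmaN p n (m + 1) a},
      ∃ φ : ℝ,
      ∃ D ∈ Submonoid.closure
          (⋃ b ∈ {b : Fin n → ℕ | (∀ i, b i ≤ a i) ∧ ∑ i, b i < ∑ i, a i},
            DgrpN p n (m + 1) b),
      ∃ E ∈ Submonoid.closure
          (⋃ c ∈ {c : Fin n → ℕ | (∀ i, 1 ≤ c i ∧ c i ≤ p - 1) ∧
              ∑ i, c i ≤ (∑ i, a i) + (p - 1)},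
            DgrpN p n m c),
      W = Complex.exp (φ * Complex.I) • (G * D * E)}
  termination_by m a => (m, ∑ i, a i)
  decreasing_by
  · rename_i hb
    exact Prod.Lex.right _ hb.2
  · exact Prod.Lex.left _ _ (Nat.lt_succ_self m)

/-- The index set `S_w = {(m,a) : m ≥ 1, 0 ≤ a_i ≤ p-1, (p-1)(m-1) + wt(a) = w}`. -/
def Sw (p n w : ℕ) : Set (ℕ × (Fin n → ℕ)) :=
  {x | 1 ≤ x.1 ∧ (∀ i, x.2 i ≤ p - 1) ∧ (p - 1) * (x.1 - 1) + ∑ i, x.2 i = w}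

/-- The group `D_w = ∏_{(m,a) ∈ S_w} D_{m,a}`, expressed as the monoid generated by the
union of the (commuting) groups `D_{m,a}`. -/
noncomputable def Dw (p n : ℕ) [NeZero p] (w : ℕ) :
    Set (Matrix (Fin n → ZMod p) (Fin n → ZMod p) ℂ) :=
  ↑(Submonoid.closure (⋃ x ∈ Sw p n w, DgrpN p n x.1 x.2))

/-! ### Degree of phase functions via the augmentation ideal -/

/-- The integral group ring of `(ZMod p)^n`. -/
abbrev GrpRing (p n : ℕ) := AddMonoidAlgebra ℤ (Fin n → ZMod p)

/-- The group-ring element of the translation by `h`. -/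
noncomputable def shiftElt {p n : ℕ} (h : Fin n → ZMod p) : GrpRing p n :=
  AddMonoidAlgebra.single h 1

/-- The difference element `T_i - 1` of the group ring, for the translation by `e_i`. -/
noncomputable def diffElt {p n : ℕ} (i : Fin n) : GrpRing p n := shiftElt (Pi.single i 1) - 1

/-- The augmentation ideal of the group ring, presented by the generators `T_i - 1`. -/
noncomputable def augIdeal (p n : ℕ) : Ideal (GrpRing p n) := Ideal.span (Set.range diffElt)

/-- The pairing `⟨g, ∑ c_h T_h⟩ = ∑ c_h g(h)` of real functions with the group ring. -/
noncomputable def pairing {p n : ℕ} (g : (Fin n → ZMod p) → ℝ) : GrpRing p n →+ ℝ where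
  toFun y := y.coeff.sum fun h c => (c : ℝ) * g h
  map_zero' := by simp
  map_add' x y := by
    rw [AddMonoidAlgebra.coeff_add, Finsupp.sum_add_index'] <;> simp [add_mul]

/-- A real phase function `g` has `DegLT k` when, read modulo `ℤ`, it is a non-classical polynomial
of degree `< k`: its pairing with the `k`-th power of the augmentation ideal is integral. -/
def DegLT {p n : ℕ} (k : ℕ) (g : (Fin n → ZMod p) → ℝ) : Prop :=
  ∀ y ∈ augIdeal p n ^ k, ∃ z : ℤ, pairing g y = z

section Degree

variable {p n : ℕ}

lemma shiftElt_mul (h h' : Fin n → ZMod p) : shiftElt h * shiftElt h' = shiftElt (h + h') := by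
  simp [shiftElt, AddMonoidAlgebra.single_mul_single]

lemma shiftElt_zero : shiftElt (0 : Fin n → ZMod p) = 1 := rfl

lemma shiftElt_pow (h : Fin n → ZMod p) (k : ℕ) : shiftElt h ^ k = shiftElt (k • h) := by
  induction k with
  | zero => simp [shiftElt_zero]
  | succ k ih => rw [pow_succ, ih, shiftElt_mul, succ_nsmul]

lemma pairing_single (g : (Fin n → ZMod p) → ℝ) (h : Fin n → ZMod p) (c : ℤ) :
    pairing g (AddMonoidAlgebra.single h c) = c * g h := by
  change (Finsupp.single h c).sum (fun h (c : ℤ) => (c : ℝ) * g h) = _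
  simp

lemma pairing_shiftElt (g : (Fin n → ZMod p) → ℝ) (h : Fin n → ZMod p) :
    pairing g (shiftElt h) = g h := by
  simp [shiftElt, pairing_single]

lemma pairing_shiftElt_mul (g : (Fin n → ZMod p) → ℝ) (h : Fin n → ZMod p) (y : GrpRing p n) :
    pairing g (shiftElt h * y) = pairing (fun x => g (x + h)) y := by
  induction y using AddMonoidAlgebra.induction_linear with
  | zero => simp
  | add a b ha hb => rw [mul_add, map_add, map_add, ha, hb]
  | single a c =>
    rw [shiftElt, AddMonoidAlgebra.single_mul_single, pairing_single, pairing_single, one_mul,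
      add_comm]

lemma pairing_add (g g' : (Fin n → ZMod p) → ℝ) (y : GrpRing p n) :
    pairing (fun x => g x + g' x) y = pairing g y + pairing g' y := by
  induction y using AddMonoidAlgebra.induction_linear with
  | zero => simp
  | add a b ha hb => rw [map_add, map_add, map_add, ha, hb]; ring
  | single a c => simp only [pairing_single]; ring

lemma pairing_const_mul (c : ℝ) (g : (Fin n → ZMod p) → ℝ) (y : GrpRing p n) :
    pairing (fun x => c * g x) y = c * pairing g y := by
  induction y using AddMonoidAlgebra.induction_linear with
  | zero => simp
  | add a b ha hb => rw [map_add, map_add, ha, hb]; ring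
  | single a d => simp only [pairing_single]; ring

lemma pairing_sub (g g' : (Fin n → ZMod p) → ℝ) (y : GrpRing p n) :
    pairing (fun x => g x - g' x) y = pairing g y - pairing g' y := by
  have h := pairing_add g (fun x => (-1) * g' x) y
  rw [pairing_const_mul] at h
  convert h using 1
  · congr 2; funext x; ring
  · ring

lemma pairing_diffElt_mul (g : (Fin n → ZMod p) → ℝ) (i : Fin n) (y : GrpRing p n) :
    pairing g (diffElt i * y) = pairing (fun x => g (x + Pi.single i 1) - g x) y := by
  rw [diffElt, sub_mul, one_mul, map_sub, pairing_shiftElt_mul, pairing_sub]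

lemma DegLT.of_int {g : (Fin n → ZMod p) → ℝ} (hg : ∀ x, ∃ z : ℤ, g x = z) (k : ℕ) :
    DegLT k g := by
  intro y hy
  clear hy
  induction y using AddMonoidAlgebra.induction_linear with
  | zero => exact ⟨0, by simp⟩
  | add a b ha hb =>
    obtain ⟨u, hu⟩ := ha
    obtain ⟨v, hv⟩ := hb
    exact ⟨u + v, by rw [map_add, hu, hv]; push_cast; ring⟩
  | single a c =>
    obtain ⟨z, hz⟩ := hg a
    exact ⟨c * z, by rw [pairing_single, hz]; push_cast; ring⟩

lemma degLT_zero {g : (Fin n → ZMod p) → ℝ} : DegLT 0 g ↔ ∀ x, ∃ z : ℤ, g x = z := by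
  refine ⟨fun h x => ?_, fun h => .of_int h 0⟩
  rw [← pairing_shiftElt g x]
  exact h _ (by simp)

lemma DegLT.add {k : ℕ} {g g' : (Fin n → ZMod p) → ℝ} (h : DegLT k g) (h' : DegLT k g') :
    DegLT k (fun x => g x + g' x) := by
  intro y hy
  obtain ⟨u, hu⟩ := h y hy
  obtain ⟨v, hv⟩ := h' y hy
  exact ⟨u + v, by rw [pairing_add, hu, hv]; push_cast; ring⟩

lemma DegLT.int_mul {k : ℕ} {g : (Fin n → ZMod p) → ℝ} (h : DegLT k g) (c : ℤ) :
    DegLT k (fun x => c * g x) := by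
  intro y hy
  obtain ⟨u, hu⟩ := h y hy
  exact ⟨c * u, by rw [pairing_const_mul, hu]; push_cast; ring⟩

lemma DegLT.sub {k : ℕ} {g g' : (Fin n → ZMod p) → ℝ} (h : DegLT k g) (h' : DegLT k g') :
    DegLT k (fun x => g x - g' x) := by
  convert h.add (h'.int_mul (-1)) using 2
  push_cast; ring

lemma DegLT.sum {ι : Type*} {k : ℕ} (s : Finset ι) (g : ι → (Fin n → ZMod p) → ℝ)
    (h : ∀ j ∈ s, DegLT k (g j)) : DegLT k (fun x => ∑ j ∈ s, g j x) := by
  classical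
  induction s using Finset.induction_on with
  | empty => exact .of_int (fun x => ⟨0, by simp⟩) k
  | insert a s ha ih =>
    simp only [Finset.sum_insert ha]
    exact (h a (by simp)).add (ih fun j hj => h j (by simp [hj]))

lemma DegLT.mono {k l : ℕ} (hkl : k ≤ l) {g : (Fin n → ZMod p) → ℝ} (h : DegLT k g) :
    DegLT l g :=
  fun y hy => h y (Ideal.pow_le_pow_right hkl hy)

/-- Phases that agree modulo `ℤ` have the same degree. -/
lemma DegLT.congr {k : ℕ} {g g' : (Fin n → ZMod p) → ℝ} (h : DegLT k g)
    (hgg : ∀ x, ∃ z : ℤ, g' x - g x = z) : DegLT k g' := by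
  convert h.add (.of_int hgg k) using 2
  ring

lemma DegLT.shift {k : ℕ} {g : (Fin n → ZMod p) → ℝ} (h : DegLT k g) (v : Fin n → ZMod p) :
    DegLT k (fun x => g (x + v)) := by
  intro y hy
  rw [← pairing_shiftElt_mul]
  exact h _ (Ideal.mul_mem_left _ _ hy)

/-- Having degree `< k + 1` means that all differences along the coordinate directions have degree
`< k`. -/
lemma degLT_succ {k : ℕ} {g : (Fin n → ZMod p) → ℝ} :
    DegLT (k + 1) g ↔ ∀ i, DegLT k (fun x => g (x + Pi.single i 1) - g x) := by
  constructor
  · intro h i y hy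
    rw [← pairing_diffElt_mul]
    apply h
    rw [pow_succ']
    exact Ideal.mul_mem_mul (Ideal.subset_span ⟨i, rfl⟩) hy
  · intro h y hy
    rw [pow_succ'] at hy
    induction hy using Submodule.mul_induction_on' with
    | mem_mul_mem a ha b hb =>
      -- the coefficient of a generator can be moved to the factor in `augIdeal ^ k`
      induction ha using Submodule.span_induction generalizing b with
      | mem a ha =>
        obtain ⟨i, rfl⟩ := ha
        rw [pairing_diffElt_mul]
        exact h i b hb
      | zero => exact ⟨0, by simp⟩
      | add a a' _ _ iha iha' =>
        obtain ⟨u, hu⟩ := iha b hb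
        obtain ⟨v, hv⟩ := iha' b hb
        exact ⟨u + v, by rw [add_mul, map_add, hu, hv]; push_cast; ring⟩
      | smul c a _ iha =>
        rw [smul_eq_mul, mul_comm c a, mul_assoc]
        exact iha _ (Ideal.mul_mem_left _ _ hb)
    | add a _ b _ iha ihb =>
      obtain ⟨u, hu⟩ := iha
      obtain ⟨v, hv⟩ := ihb
      exact ⟨u + v, by rw [map_add, hu, hv]; push_cast; ring⟩

lemma degLT_const (c : ℝ) {k : ℕ} (hk : 1 ≤ k) : DegLT k (fun _ : Fin n → ZMod p => c) := by
  refine DegLT.mono hk (degLT_succ.2 fun i => degLT_zero.2 fun x => ⟨0, by simp⟩)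

lemma shiftElt_sub_one_mem [NeZero p] (h : Fin n → ZMod p) : shiftElt h - 1 ∈ augIdeal p n := by
  have hadd : ∀ u v : Fin n → ZMod p, shiftElt u - 1 ∈ augIdeal p n →
      shiftElt v - 1 ∈ augIdeal p n → shiftElt (u + v) - 1 ∈ augIdeal p n := by
    intro u v hu hv
    have : shiftElt (u + v) - 1 = shiftElt u * (shiftElt v - 1) + (shiftElt u - 1) := by
      rw [← shiftElt_mul]; ring
    rw [this]
    exact add_mem (Ideal.mul_mem_left _ _ hv) hu
  have hsm : ∀ (i : Fin n) (k : ℕ), shiftElt (k • (Pi.single i 1 : Fin n → ZMod p)) - 1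
      ∈ augIdeal p n := by
    intro i k
    induction k with
    | zero => simp [shiftElt_zero]
    | succ k ih =>
      rw [succ_nsmul]
      exact hadd _ _ ih (Ideal.subset_span ⟨i, rfl⟩)
  have hs : ∀ s : Finset (Fin n),
      shiftElt (∑ i ∈ s, (h i).val • (Pi.single i 1 : Fin n → ZMod p)) - 1 ∈ augIdeal p n := by
    intro s
    classical
    induction s using Finset.induction_on with
    | empty => simp [shiftElt_zero]
    | insert a s ha ih =>
      rw [Finset.sum_insert ha]
      exact hadd _ _ (hsm _ _) ih
  have hh : h = ∑ i, (h i).val • (Pi.single i 1 : Fin n → ZMod p) := by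
    funext j
    rw [Finset.sum_apply]
    simp only [Pi.smul_apply, Pi.single_apply, nsmul_eq_mul, ZMod.natCast_val, ZMod.cast_id', id]
    simp
  rw [hh]
  exact hs _

lemma DegLT.diff [NeZero p] {k : ℕ} {g : (Fin n → ZMod p) → ℝ} (h : DegLT (k + 1) g)
    (v : Fin n → ZMod p) : DegLT k (fun x => g (x + v) - g x) := by
  intro y hy
  have : pairing (fun x => g (x + v) - g x) y = pairing g ((shiftElt v - 1) * y) := by
    rw [pairing_sub, sub_mul, one_mul, map_sub, pairing_shiftElt_mul]
  rw [this]
  apply h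
  rw [pow_succ']
  exact Ideal.mul_mem_mul (shiftElt_sub_one_mem v) hy

/-- In the group ring, `p (T_i - 1)` is a multiple of `(T_i - 1)^p`: expanding
`1 = T_i^p = (1 + D)^p` gives `p D (1 + D s) = - D^p`, and `1 + D s` is invertible modulo
`D^p`. -/
lemma diffElt_pow_dvd (hp : p.Prime) (i : Fin n) :
    (diffElt i : GrpRing p n) ^ p ∣ (p : GrpRing p n) * diffElt i := by
  set D : GrpRing p n := diffElt i with hD
  have h1 : (D + 1) ^ p = 1 := by
    rw [hD, diffElt, sub_add_cancel, shiftElt_pow, ← shiftElt_zero]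
    congr 1
    ext j
    simp
  rw [add_pow_prime_eq hp] at h1
  set S : GrpRing p n := ∑ k ∈ Finset.Ioo 0 p, D ^ (k - 1) * 1 ^ (p - k - 1) * ↑(p.choose k / p)
    with hS
  have hS1 : D ∣ S - 1 := by
    have hmem : 1 ∈ Finset.Ioo 0 p := by simp [hp.one_lt]
    rw [hS, ← Finset.add_sum_erase _ _ hmem]
    have : D ^ (1 - 1) * 1 ^ (p - 1 - 1) * ((p.choose 1 / p : ℕ) : GrpRing p n) = 1 := by
      simp [Nat.div_self hp.pos]
    rw [this, add_sub_cancel_left]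
    refine Finset.dvd_sum fun k hk => ?_
    have hk' : k - 1 ≠ 0 := by
      simp only [Finset.mem_erase, Finset.mem_Ioo] at hk
      omega
    exact ((dvd_pow_self D hk').mul_right _).mul_right _
  obtain ⟨s, hs⟩ := hS1
  have hrel : p * D * S = - D ^ p := by
    have : p * D * S = (D ^ p + 1 ^ p + p * D * 1 * S) - D ^ p - 1 := by ring
    rw [this, h1]; ring
  obtain ⟨q, hq⟩ : S ∣ 1 - (-(D * s)) ^ p := by
    have hS' : S = 1 - (-(D * s)) := by rw [← hs]; ring
    rw [hS']
    simpa using sub_dvd_pow_sub_pow (1 : GrpRing p n) (-(D * s)) p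
  refine ⟨- q + p * D * (-s) ^ p, ?_⟩
  calc (p : GrpRing p n) * D = p * D * (1 - (-(D * s)) ^ p) + p * D * (-(D * s)) ^ p := by ring
    _ = p * D * S * q + p * D * (-(D * s)) ^ p := by rw [hq]; ring
    _ = D ^ p * (- q + p * D * (-s) ^ p) := by
      rw [hrel, show -(D * s) = D * (-s) by ring, mul_pow]; ring

/-- Multiplying by `p` raises the augmentation filtration by `p - 1`. -/
lemma p_pow_mul_mem (hp : p.Prime) (m j : ℕ) {y : GrpRing p n} (hy : y ∈ augIdeal p n ^ (j + 1)) :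
    (p : GrpRing p n) ^ m * y ∈ augIdeal p n ^ (j + 1 + m * (p - 1)) := by
  have hone : ∀ a ∈ augIdeal p n, (p : GrpRing p n) * a ∈ augIdeal p n ^ p := by
    intro a ha
    induction ha using Submodule.span_induction with
    | mem a ha =>
      obtain ⟨i, rfl⟩ := ha
      have hi : diffElt i ∈ augIdeal p n := Ideal.subset_span ⟨i, rfl⟩
      exact Ideal.mem_of_dvd _ (diffElt_pow_dvd hp i) (Ideal.pow_mem_pow hi p)
    | zero => simp
    | add a b _ _ iha ihb => rw [mul_add]; exact add_mem iha ihb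
    | smul c a _ ih =>
      rw [smul_eq_mul, mul_left_comm]
      exact Ideal.mul_mem_left _ _ ih
  have hstep : ∀ (k : ℕ) (a : GrpRing p n), a ∈ augIdeal p n ^ (k + 1) →
      (p : GrpRing p n) * a ∈ augIdeal p n ^ (k + 1 + (p - 1)) := by
    intro k a ha
    rw [pow_succ] at ha
    have hexp : k + 1 + (p - 1) = k + p := by have := hp.pos; omega
    rw [hexp, pow_add]
    induction ha using Submodule.mul_induction_on' with
    | mem_mul_mem a ha b hb =>
      rw [mul_left_comm]
      exact Ideal.mul_mem_mul ha (hone b hb)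
    | add a _ b _ iha ihb => rw [mul_add]; exact add_mem iha ihb
  induction m with
  | zero => simpa using hy
  | succ m ih =>
    have := hstep (j + m * (p - 1)) _ (by convert ih using 2; ring)
    rw [pow_succ', mul_assoc]
    convert this using 2
    ring

end Degree

/-! ### Binomial and monomial functions -/

section Binomial

variable {p n : ℕ}

/-- The integer-valued function `x ↦ ∏ i, C(|x_i|, b_i)`, where `|x_i|` is the representative of
`x_i` in `{0, …, p - 1}`. -/
def binomFn (b : Fin n → ℕ) (x : Fin n → ZMod p) : ℕ := ∏ i, (x i).val.choose (b i)

/-- The integer-valued monomial `x ↦ ∏ i, |x_i| ^ a_i`. -/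
def monoFn (a : Fin n → ℕ) (x : Fin n → ZMod p) : ℕ := ∏ i, (x i).val ^ a i

lemma choose_val_add_one [NeZero p] (hp : p.Prime) (z : ZMod p) {b : ℕ} (hb : 1 ≤ b)
    (hb' : b ≤ p - 1) :
    ((z + 1).val.choose b : ℤ) =
      z.val.choose b + z.val.choose (b - 1) - p.choose b * z.val.choose (p - 1) := by
  obtain ⟨b, rfl⟩ : ∃ c, b = c + 1 := ⟨b - 1, by omega⟩
  obtain ⟨q, hq⟩ : ∃ q, p = q + 1 := ⟨p - 1, by have := hp.pos; omega⟩
  have hz := ZMod.val_lt z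
  have : Fact (1 < p) := ⟨hp.one_lt⟩
  have hadd := ZMod.val_add z 1
  rw [ZMod.val_one] at hadd
  rcases Nat.lt_or_ge (z.val + 1) p with h | h
  · rw [Nat.mod_eq_of_lt h] at hadd
    rw [hadd, Nat.choose_eq_zero_of_lt (show z.val < p - 1 by omega), Nat.choose_succ_succ]
    simp; ring
  · have hzv : z.val = q := by omega
    rw [hzv, ← hq, Nat.mod_self] at hadd
    rw [hadd, hzv, Nat.choose_zero_succ, show p - 1 = q by omega, Nat.choose_self, hq,
      Nat.choose_succ_succ]
    simp; ring

lemma binomFn_split (b : Fin n → ℕ) (x : Fin n → ZMod p) (i : Fin n) :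
    binomFn b x = (x i).val.choose (b i) * ∏ j ∈ Finset.univ.erase i, (x j).val.choose (b j) :=
  (Finset.mul_prod_erase _ _ (Finset.mem_univ i)).symm

/-- The difference of a product of binomials along `e_i`: Pascal's rule, corrected by a multiple
of `p` where the representative wraps around. -/
lemma binomFn_diff [NeZero p] (hp : p.Prime) (b : Fin n → ℕ) (x : Fin n → ZMod p) (i : Fin n)
    (hb : 1 ≤ b i) (hb' : b i ≤ p - 1) :
    (binomFn b (x + Pi.single i 1) : ℤ) - binomFn b x =
      binomFn (Function.update b i (b i - 1)) x
        - p.choose (b i) * binomFn (Function.update b i (p - 1)) x := by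
  simp only [binomFn_split _ _ i, Function.update_self]
  have h1 : ∀ c, ∏ j ∈ Finset.univ.erase i, (x j).val.choose (Function.update b i c j)
      = ∏ j ∈ Finset.univ.erase i, (x j).val.choose (b j) := fun c =>
    Finset.prod_congr rfl fun j hj => by
      rw [Function.update_of_ne (Finset.ne_of_mem_erase hj)]
  have h2 : ∏ j ∈ Finset.univ.erase i, ((x + Pi.single i 1 : Fin n → ZMod p) j).val.choose (b j)
      = ∏ j ∈ Finset.univ.erase i, (x j).val.choose (b j) :=
    Finset.prod_congr rfl fun j hj => by
      rw [Pi.add_apply, Pi.single_eq_of_ne (Finset.ne_of_mem_erase hj), add_zero]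
  rw [h1, h1, h2, Pi.add_apply, Pi.single_eq_same]
  push_cast
  rw [choose_val_add_one hp _ hb hb']
  ring

lemma binomFn_diff_zero (b : Fin n → ℕ) (x : Fin n → ZMod p) (i : Fin n) (hb : b i = 0) :
    binomFn b (x + Pi.single i 1) = binomFn b x := by
  simp only [binomFn_split _ _ i, hb, Nat.choose_zero_right]
  congr 1
  refine Finset.prod_congr rfl fun j hj => ?_
  rw [Pi.add_apply, Pi.single_eq_of_ne (Finset.ne_of_mem_erase hj), add_zero]

lemma sum_update_add (b : Fin n → ℕ) (i : Fin n) (c : ℕ) :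
    ∑ j, Function.update b i c j + b i = c + ∑ j, b j := by
  rw [Finset.sum_update_of_mem (Finset.mem_univ i), ← Finset.add_sum_erase _ b (Finset.mem_univ i),
    Finset.sdiff_singleton_eq_erase]
  ring

/-- `∏ C(|x_i|, b_i) / p^m` has degree at most `(p - 1)(m - 1) + |b|`. The hypothesis `hk` is written
without subtracting from `m`, so that `m = 0` is allowed. -/
lemma degLT_binomFn [NeZero p] (hp : p.Prime) (k m : ℕ) (b : Fin n → ℕ) (hb : ∀ i, b i ≤ p - 1)
    (hk : (p - 1) * m + ∑ i, b i < k + (p - 1)) :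
    DegLT k (fun x : Fin n → ZMod p => (binomFn b x : ℝ) / (p : ℝ) ^ m) := by
  have hp0 : (p : ℝ) ≠ 0 := by exact_mod_cast hp.ne_zero
  induction k generalizing m b with
  | zero =>
    have hm : m = 0 := by
      by_contra hm
      have := Nat.le_mul_of_pos_right (p - 1) (Nat.pos_of_ne_zero hm)
      omega
    subst hm
    exact .of_int (fun x => ⟨binomFn b x, by simp⟩) _
  | succ k ih =>
    refine degLT_succ.2 fun i => ?_
    rcases Nat.eq_zero_or_pos (b i) with h0 | h0
    · simp only [binomFn_diff_zero b _ i h0, sub_self]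
      exact .of_int (fun x => ⟨0, by simp⟩) _
    rcases m with _ | m
    · exact .of_int (fun x => ⟨binomFn b (x + Pi.single i 1) - binomFn b x, by simp⟩) _
    obtain ⟨q, hq⟩ := hp.dvd_choose_self (k := b i) (by omega)
      (by have := hb i; have := hp.pos; omega)
    have hu : ∀ c ≤ p - 1, ∀ j, Function.update b i c j ≤ p - 1 := by
      intro c hc j
      by_cases hj : j = i
      · subst hj; simpa using hc
      · simpa [hj] using hb j
    have h1 := ih (m + 1) (Function.update b i (b i - 1)) (hu _ (by have := hb i; omega)) (by
      have := sum_update_add b i (b i - 1); omega)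
    have h2 := ih m (Function.update b i (p - 1)) (hu _ le_rfl) (by
      have := sum_update_add b i (p - 1)
      rw [Nat.mul_succ] at hk
      omega)
    convert h1.sub (h2.int_mul q) using 2 with x
    have hd := binomFn_diff hp b x i h0 (hb i)
    rw [hq] at hd
    have hd' : (binomFn b (x + Pi.single i 1) : ℝ) - binomFn b x =
      binomFn (Function.update b i (b i - 1)) x
        - (p * q) * binomFn (Function.update b i (p - 1)) x := by exact_mod_cast hd
    rw [← sub_div, hd', pow_succ]
    push_cast
    field_simp

/-- Multiplies out a product of one-variable expansions. -/
lemma prod_expand (a : Fin n → ℕ) (y : Fin n → ℤ) (c e : Fin n → ℕ → ℤ)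
    (h : ∀ i, y i = ∑ k ∈ Finset.range (a i + 1), c i k * e i k) :
    ∏ i, y i = ∑ b ∈ Fintype.piFinset (fun i => Finset.range (a i + 1)),
      (∏ i, c i (b i)) * ∏ i, e i (b i) := by
  simp only [h, Finset.prod_univ_sum, Finset.prod_mul_distrib]

lemma exists_pow_expansion (a : ℕ) : ∃ t : ℕ → ℤ, ∀ j : ℕ,
    ((j : ℤ) ^ a) = ∑ k ∈ Finset.range (a + 1), t k * (j.choose k : ℤ) := by
  refine ⟨fun k => (fwdDiff (1 : ℤ))^[k] (fun x : ℤ => x ^ a) 0, fun j => ?_⟩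
  have h := shift_eq_sum_fwdDiff_iter (1 : ℤ) (fun x : ℤ => x ^ a) j 0
  simp only [nsmul_eq_mul, mul_one, zero_add] at h
  rw [h]
  have hz : ∀ k, a < k → (fwdDiff (1 : ℤ))^[k] (fun x : ℤ => x ^ a) 0 = 0 := fun k hk => by
    rw [fwdDiff_iter_pow_eq_zero_of_lt hk]; rfl
  have e1 := Finset.sum_subset (f := fun k => (j.choose k : ℤ) *
      (fwdDiff (1 : ℤ))^[k] (fun x : ℤ => x ^ a) 0)
    (Finset.range_mono (show j + 1 ≤ max (j + 1) (a + 1) from le_max_left _ _))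
    (fun k _ hk => by
      rw [Nat.choose_eq_zero_of_lt (by simpa using hk)]; simp)
  have e2 := Finset.sum_subset (f := fun k => (j.choose k : ℤ) *
      (fwdDiff (1 : ℤ))^[k] (fun x : ℤ => x ^ a) 0)
    (Finset.range_mono (show a + 1 ≤ max (j + 1) (a + 1) from le_max_right _ _))
    (fun k _ hk => by
      rw [hz k (by simpa using hk)]; simp)
  rw [e1, ← e2]
  exact Finset.sum_congr rfl fun k _ => mul_comm _ _

lemma exists_choose_expansion (a : ℕ) : ∃ s : ℕ → ℤ, ∀ j : ℕ,
    ((a.factorial * j.choose a : ℕ) : ℤ) = ∑ k ∈ Finset.range (a + 1), s k * (j : ℤ) ^ k := by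
  refine ⟨(descPochhammer ℤ a).coeff, fun j => ?_⟩
  rw [← Nat.descFactorial_eq_factorial_mul_choose, ← descPochhammer_eval_eq_descFactorial,
    Polynomial.eval_eq_sum_range, descPochhammer_natDegree]

/-- A monomial is an integral combination of products of binomials with exponents at most `a`. -/
lemma monoFn_expansion (a : Fin n → ℕ) : ∃ t : (Fin n → ℕ) → ℤ, ∀ x : Fin n → ZMod p,
    (monoFn a x : ℤ) = ∑ b ∈ Fintype.piFinset (fun i => Finset.range (a i + 1)),
      t b * binomFn b x := by
  choose t ht using exists_pow_expansion
  refine ⟨fun b => ∏ i, t (a i) (b i), fun x => ?_⟩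
  have := prod_expand a (fun i => ((x i).val : ℤ) ^ a i) (fun i k => t (a i) k)
    (fun i k => ((x i).val.choose k : ℤ)) (fun i => ht _ _)
  simpa [monoFn, binomFn] using this

/-- `∏ a_i!` times a product of binomials is an integral combination of monomials with exponents
at most `a`. -/
lemma binomFn_expansion (a : Fin n → ℕ) : ∃ s : (Fin n → ℕ) → ℤ, ∀ x : Fin n → ZMod p,
    ((∏ i, (a i).factorial : ℕ) : ℤ) * binomFn a x =
      ∑ b ∈ Fintype.piFinset (fun i => Finset.range (a i + 1)), s b * monoFn b x := by
  choose s hs using exists_choose_expansion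
  refine ⟨fun b => ∏ i, s (a i) (b i), fun x => ?_⟩
  have := prod_expand a (fun i => (((a i).factorial * (x i).val.choose (a i) : ℕ) : ℤ))
    (fun i k => s (a i) k) (fun i k => ((x i).val : ℤ) ^ k) (fun i => hs _ _)
  simpa [monoFn, binomFn, Finset.prod_mul_distrib] using this

/-- `∏ |x_i| ^ a_i / p^m` has degree at most `(p - 1)(m - 1) + |a|`. -/
lemma degLT_monoFn [NeZero p] (hp : p.Prime) (k m : ℕ) (a : Fin n → ℕ) (ha : ∀ i, a i ≤ p - 1)
    (hk : (p - 1) * m + ∑ i, a i < k + (p - 1)) :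
    DegLT k (fun x : Fin n → ZMod p => (monoFn a x : ℝ) / (p : ℝ) ^ m) := by
  obtain ⟨t, ht⟩ := monoFn_expansion (p := p) a
  have h := DegLT.sum (k := k) (Fintype.piFinset (fun i => Finset.range (a i + 1)))
    (fun b (x : Fin n → ZMod p) => (t b : ℝ) * ((binomFn b x : ℝ) / (p : ℝ) ^ m)) (by
      intro b hb
      have hba : ∀ i, b i ≤ a i := fun i => by
        have := Fintype.mem_piFinset.1 hb i
        rw [Finset.mem_range] at this
        omega
      have hsum := Finset.sum_le_sum fun i (_ : i ∈ Finset.univ) => hba i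
      exact (degLT_binomFn hp k m b (fun i => (hba i).trans (ha i)) (by omega)).int_mul _)
  convert h using 2 with x
  have hx : (monoFn a x : ℝ) = ∑ b ∈ Fintype.piFinset (fun i => Finset.range (a i + 1)),
      (t b : ℝ) * binomFn b x := by exact_mod_cast ht x
  rw [hx, Finset.sum_div]
  exact Finset.sum_congr rfl fun b _ => mul_div_assoc _ _ _

/-- Newton's expansion of the shift `T^x = ∏ (1 + D_i)^{|x_i|}` in the group ring. -/
lemma shiftElt_expansion [NeZero p] (x : Fin n → ZMod p) :
    (shiftElt x : GrpRing p n) = ∑ a ∈ Fintype.piFinset (fun _ : Fin n => Finset.range p),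
      (binomFn a x : ℤ) • ∏ i, diffElt i ^ a i := by
  have hs : ∀ s : Finset (Fin n), (shiftElt (∑ i ∈ s, Pi.single i (x i)) : GrpRing p n)
      = ∏ i ∈ s, (diffElt i + 1) ^ (x i).val := by
    intro s
    induction s using Finset.induction_on with
    | empty => simp [shiftElt_zero]
    | insert a s ha ih =>
      rw [Finset.sum_insert ha, Finset.prod_insert ha, ← shiftElt_mul, ih, diffElt, sub_add_cancel,
        shiftElt_pow]
      congr 2
      funext j
      by_cases hj : j = a
      · subst hj; simp [-Pi.single_eq_same, Pi.smul_apply]; simp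
      · simp [Pi.smul_apply, hj]
  have hx : x = ∑ i, Pi.single i (x i) := by
    funext j
    simp [Finset.sum_apply, Pi.single_apply]
  conv_lhs => rw [hx, hs]
  have hone : ∀ i, (diffElt i + 1 : GrpRing p n) ^ (x i).val =
      ∑ k ∈ Finset.range p, diffElt i ^ k * ((x i).val.choose k : GrpRing p n) := by
    intro i
    rw [add_pow]
    simp only [one_pow, mul_one]
    refine Finset.sum_subset (Finset.range_mono (ZMod.val_lt (x i))) fun k _ hk => ?_
    rw [Nat.choose_eq_zero_of_lt (by simpa using hk)]; simp
  simp only [hone, Finset.prod_univ_sum, Finset.prod_mul_distrib]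
  refine Finset.sum_congr rfl fun a _ => ?_
  rw [zsmul_eq_mul, mul_comm, binomFn]
  push_cast
  rfl

/-- Newton's expansion of a function of degree `≤ w`, with `p`-power denominators controlled by the
degree. -/
lemma DegLT.expansion [NeZero p] (hp : p.Prime) {w : ℕ} {g : (Fin n → ZMod p) → ℝ}
    (hg : DegLT (w + 1) g) : ∃ c : (Fin n → ℕ) → ℝ,
    (∀ x, g x = ∑ a ∈ Fintype.piFinset (fun _ : Fin n => Finset.range p), binomFn a x * c a) ∧
    ∀ a, 1 ≤ ∑ i, a i → ∀ m, w + 1 ≤ ∑ i, a i + m * (p - 1) → ∃ z : ℤ, (p : ℝ) ^ m * c a = z := by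
  refine ⟨fun a => pairing g (∏ i, diffElt i ^ a i), fun x => ?_, fun a ha m hm => ?_⟩
  · rw [← pairing_shiftElt g x, shiftElt_expansion, map_sum]
    refine Finset.sum_congr rfl fun a _ => ?_
    rw [map_zsmul, zsmul_eq_mul]
    simp
  · have hmem : (∏ i, diffElt i ^ a i : GrpRing p n) ∈ augIdeal p n ^ (∑ i, a i) := by
      rw [← Finset.prod_pow_eq_pow_sum]
      refine Ideal.prod_mem_prod fun i _ => Ideal.pow_mem_pow ?_ _
      exact Ideal.subset_span ⟨i, rfl⟩
    obtain ⟨j, hj⟩ : ∃ j, ∑ i, a i = j + 1 := ⟨_, (Nat.sub_add_cancel ha).symm⟩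
    rw [hj] at hmem
    obtain ⟨z, hz⟩ := hg _ (Ideal.pow_le_pow_right (by omega) (p_pow_mul_mem hp m j hmem))
    refine ⟨z, ?_⟩
    rw [← hz, ← Nat.cast_pow, ← Nat.cast_pow, ← nsmul_eq_mul, ← nsmul_eq_mul, map_nsmul]

end Binomial

/-! ### Generalised permutation matrices with phases -/

section PhaseMatrices

variable {p n : ℕ}

/-- The phase `exp(2πi t)`. -/
noncomputable def phase (t : ℝ) : ℂ := Complex.exp (2 * Real.pi * Complex.I * (t : ℂ))

lemma phase_add (s t : ℝ) : phase (s + t) = phase s * phase t := by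
  rw [phase, phase, phase, ← Complex.exp_add]
  congr 1
  push_cast
  ring

lemma phase_zero : phase 0 = 1 := by simp [phase]

lemma phase_ne_zero (t : ℝ) : phase t ≠ 0 := Complex.exp_ne_zero _

lemma phase_eq_one_iff {t : ℝ} : phase t = 1 ↔ ∃ z : ℤ, t = z := by
  rw [phase, Complex.exp_eq_one_iff]
  have hpi : (2 * Real.pi * Complex.I : ℂ) ≠ 0 := by
    simp [Real.pi_ne_zero, Complex.I_ne_zero]
  refine exists_congr fun z => ?_
  rw [mul_comm (z : ℂ), mul_right_inj' hpi]
  norm_cast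

lemma phase_eq_iff {s t : ℝ} : phase s = phase t ↔ ∃ z : ℤ, s - t = z := by
  rw [← phase_eq_one_iff, sub_eq_add_neg, phase_add]
  have h : phase t * phase (-t) = 1 := by rw [← phase_add]; simp [phase_zero]
  constructor
  · intro e
    rw [e, h]
  · intro e
    apply mul_right_cancel₀ (phase_ne_zero (-t))
    rw [e, h]

lemma star_phase (t : ℝ) : star (phase t) = phase (-t) := by
  rw [phase, phase, Complex.star_def, ← Complex.exp_conj]
  congr 1
  simp [map_ofNat]

lemma phase_nat_mul (k : ℕ) (t : ℝ) : phase (k * t) = phase t ^ k := by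
  rw [phase, phase, ← Complex.exp_nat_mul]
  congr 1
  push_cast
  ring

lemma exp_mul_I_eq_phase (φ : ℝ) : Complex.exp (φ * Complex.I) = phase (φ / (2 * Real.pi)) := by
  rw [phase]
  congr 1
  have : (Real.pi : ℂ) ≠ 0 := by exact_mod_cast Real.pi_ne_zero
  push_cast
  field_simp

lemma phase_eq_exp_mul_I (t : ℝ) : phase t = Complex.exp ((2 * Real.pi * t : ℝ) * Complex.I) := by
  rw [phase]
  congr 1
  push_cast
  ring

lemma exists_phase {z : ℂ} (hz : z * star z = 1) : ∃ t, z = phase t := by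
  have hn : ‖z‖ = 1 := by
    have h : ‖z‖ ^ 2 = 1 := by
      have := congrArg norm hz
      rw [norm_mul, norm_star, norm_one] at this
      rw [sq, this]
    exact (pow_eq_one_iff_of_nonneg (norm_nonneg z) two_ne_zero).1 h
  refine ⟨z.arg / (2 * Real.pi), ?_⟩
  rw [← exp_mul_I_eq_phase]
  have := Complex.norm_mul_exp_arg_mul_I z
  rw [hn] at this
  simpa using this.symm

/-- The gate `|j⟩ ↦ exp(2πi g(j + h)) |j + h⟩`: the translation by `h` followed by the diagonal
gate with phase function `g`. -/
noncomputable def phaseMat (g : (Fin n → ZMod p) → ℝ) (h : Fin n → ZMod p) :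
    Matrix (Fin n → ZMod p) (Fin n → ZMod p) ℂ :=
  Matrix.of fun r c => if r = c + h then phase (g r) else 0

lemma phaseMat_apply (g : (Fin n → ZMod p) → ℝ) (h r c : Fin n → ZMod p) :
    phaseMat g h r c = if r = c + h then phase (g r) else 0 := rfl

lemma phaseMat_congr {g g' : (Fin n → ZMod p) → ℝ} (h : Fin n → ZMod p)
    (hg : ∀ r, ∃ z : ℤ, g r - g' r = z) : phaseMat g h = phaseMat g' h := by
  ext r c
  rw [phaseMat_apply, phaseMat_apply, phase_eq_iff.2 (hg r)]

lemma phaseMat_inj {g g' : (Fin n → ZMod p) → ℝ} {h h' : Fin n → ZMod p}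
    (e : phaseMat g h = phaseMat g' h') : h = h' ∧ ∀ r, ∃ z : ℤ, g r - g' r = z := by
  have key : ∀ r, h = h' ∧ phase (g r) = phase (g' r) := by
    intro r
    have := congrFun (congrFun e r) (r - h)
    rw [phaseMat_apply, phaseMat_apply, if_pos (by abel)] at this
    split_ifs at this with hr
    · refine ⟨?_, this⟩
      have h0 : r - h + h' = r - h + h := by rw [← hr]; abel
      exact (add_left_cancel h0).symm
    · exact absurd this (phase_ne_zero _)
  exact ⟨(key 0).1, fun r => phase_eq_iff.1 (key r).2⟩

lemma phaseMat_const (c : ℝ) : phaseMat (fun _ => c) (0 : Fin n → ZMod p) = phase c • 1 := by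
  ext r s
  simp [phaseMat_apply, Matrix.one_apply]

lemma phaseMat_zero : phaseMat (fun _ => 0) (0 : Fin n → ZMod p) = 1 := by
  rw [phaseMat_const, phase_zero, one_smul]

lemma smul_phaseMat (c : ℝ) (g : (Fin n → ZMod p) → ℝ) (h : Fin n → ZMod p) :
    phase c • phaseMat g h = phaseMat (fun x => c + g x) h := by
  ext r s
  simp [phaseMat_apply, phase_add]

lemma phaseMat_conjTranspose (g : (Fin n → ZMod p) → ℝ) (h : Fin n → ZMod p) :
    (phaseMat g h)ᴴ = phaseMat (fun r => - g (r + h)) (-h) := by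
  ext r c
  rw [Matrix.conjTranspose_apply, phaseMat_apply, phaseMat_apply]
  have : c = r + h ↔ r = c + -h := by
    rw [← sub_eq_add_neg, eq_sub_iff_add_eq, eq_comm]
  by_cases e : c = r + h
  · rw [if_pos e, if_pos (this.1 e), star_phase, e]
  · rw [if_neg e, if_neg (fun h' => e (this.2 h')), star_zero]

lemma pauliPhase_eq : ∃ t : ℝ, pauliPhase p = phase t := by
  rw [pauliPhase]
  split_ifs with h
  · refine ⟨1 / 4, ?_⟩
    conv_lhs => rw [← Complex.exp_pi_div_two_mul_I]
    rw [phase]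
    congr 1
    push_cast
    ring
  · refine ⟨1 / p, ?_⟩
    rw [phase]
    congr 1
    push_cast
    ring

variable [NeZero p]

lemma phaseMat_mul (g g' : (Fin n → ZMod p) → ℝ) (h h' : Fin n → ZMod p) :
    phaseMat g h * phaseMat g' h' = phaseMat (fun r => g r + g' (r - h)) (h + h') := by
  ext r c
  rw [Matrix.mul_apply, phaseMat_apply, Finset.sum_eq_single (r - h)]
  · rw [phaseMat_apply, phaseMat_apply, if_pos (by abel), phase_add]
    have : r - h = c + h' ↔ r = c + (h + h') := by
      rw [sub_eq_iff_eq_add, add_assoc, add_comm h']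
    simp only [this, mul_ite, mul_zero]
  · intro b _ hb
    rw [phaseMat_apply, if_neg, zero_mul]
    rintro rfl
    exact hb (by abel)
  · simp

lemma phaseMat_conj (g f : (Fin n → ZMod p) → ℝ) (h h' : Fin n → ZMod p) :
    phaseMat g h * phaseMat f h' * (phaseMat g h)ᴴ =
      phaseMat (fun r => g r - g (r - h') + f (r - h)) h' := by
  rw [phaseMat_conjTranspose, phaseMat_mul, phaseMat_mul]
  have e1 : h + h' + -h = h' := by abel
  have e2 : ∀ r, r - (h + h') + h = r - h' := fun r => by abel
  simp only [e1, e2]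
  congr 1
  funext r
  ring

lemma phaseMat_mem_unitary (g : (Fin n → ZMod p) → ℝ) (h : Fin n → ZMod p) :
    phaseMat g h ∈ Matrix.unitaryGroup (Fin n → ZMod p) ℂ := by
  rw [Matrix.mem_unitaryGroup_iff, Matrix.star_eq_conjTranspose, phaseMat_conjTranspose,
    phaseMat_mul, ← phaseMat_zero]
  congr 1
  · funext r; simp
  · abel

lemma phaseMat_pow (g : (Fin n → ZMod p) → ℝ) (k : ℕ) :
    phaseMat g 0 ^ k = phaseMat (fun x => k * g x) 0 := by
  induction k with
  | zero => simp [phaseMat_zero]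
  | succ k ih =>
    rw [pow_succ, ih, phaseMat_mul]
    congr 1
    · funext r; push_cast; rw [sub_zero]; ring
    · abel

lemma XmatN_eq (i : Fin n) : XmatN p n i = phaseMat (fun _ => 0) (Pi.single i 1) := by
  ext r c
  have : Function.update c i (c i + 1) = c + Pi.single i 1 := by
    funext j
    by_cases hj : j = i
    · subst hj; simp
    · simp [hj]
  simp [XmatN, phaseMat_apply, this, phase_zero]

lemma UmaN_eq (m : ℕ) (a : Fin n → ℕ) :
    UmaN p n m a = phaseMat (fun x => (monoFn a x : ℝ) / (p : ℝ) ^ m) 0 := by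
  ext r c
  simp only [UmaN, phaseMat_apply, Matrix.of_apply, add_zero, phase, monoFn]
  push_cast
  rfl

lemma ZmatN_eq (i : Fin n) : ZmatN p n i = UmaN p n 1 (Pi.single i 1) := by
  ext r c
  have h : ∏ j, ((r j).val : ℂ) ^ (Pi.single i 1 : Fin n → ℕ) j = (r i).val := by
    rw [Finset.prod_eq_single i] <;> simp +contextual
  simp only [ZmatN, UmaN, Matrix.of_apply, h, pow_one]
  split_ifs with e
  · rw [e]
  · rfl

/-! ### Diagonal gates of bounded degree are generated by the gates `U_{m,a}` -/

/-- A monoid of matrices that contains the global phases and all `U_{m,b}` of weight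
`(p - 1)(m - 1) + wt(b) ≤ w` contains every diagonal gate whose phase function has degree `≤ w`. -/
lemma phaseMat_mem_of_degLT (hp : p.Prime) {w : ℕ}
    (S : Submonoid (Matrix (Fin n → ZMod p) (Fin n → ZMod p) ℂ))
    (hconst : ∀ c : ℝ, phaseMat (fun _ => c) 0 ∈ S)
    (hU : ∀ (m : ℕ) (b : Fin n → ℕ), (∀ i, b i ≤ p - 1) → (p - 1) * m + ∑ i, b i ≤ w →
      UmaN p n (m + 1) b ∈ S)
    {g : (Fin n → ZMod p) → ℝ} (hg : DegLT (w + 1) g) : phaseMat g 0 ∈ S := by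
  have hp0 : (p : ℝ) ≠ 0 := by exact_mod_cast hp.ne_zero
  have hadd : ∀ f f' : (Fin n → ZMod p) → ℝ, phaseMat f 0 ∈ S → phaseMat f' 0 ∈ S →
      phaseMat (fun x => f x + f' x) 0 ∈ S := by
    intro f f' hf hf'
    have := S.mul_mem hf hf'
    rw [phaseMat_mul] at this
    simpa using this
  have hsum : ∀ (s : Finset (Fin n → ℕ)) (f : (Fin n → ℕ) → (Fin n → ZMod p) → ℝ),
      (∀ a ∈ s, phaseMat (f a) 0 ∈ S) → phaseMat (fun x => ∑ a ∈ s, f a x) 0 ∈ S := by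
    intro s f
    induction s using Finset.induction_on with
    | empty => intro _; simpa using hconst 0
    | insert a s ha ih =>
      intro h
      simp only [Finset.sum_insert ha]
      exact hadd _ _ (h a (by simp)) (ih fun b hb => h b (by simp [hb]))
  have hcongr : ∀ f f' : (Fin n → ZMod p) → ℝ, phaseMat f 0 ∈ S →
      (∀ r, ∃ z : ℤ, f' r - f r = z) → phaseMat f' 0 ∈ S := fun f f' hf h => by
    rwa [phaseMat_congr 0 h]
  -- integer multiples of `|x|^b / p^(m+1)`: the multiplier may be reduced modulo `p^(m+1)`
  have hmono : ∀ (m : ℕ) (b : Fin n → ℕ), (∀ i, b i ≤ p - 1) → (p - 1) * m + ∑ i, b i ≤ w →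
      ∀ z : ℤ, phaseMat (fun x => (z : ℝ) * ((monoFn b x : ℝ) / (p : ℝ) ^ (m + 1))) 0 ∈ S := by
    intro m b hb hw z
    have hN : (0 : ℤ) < (p : ℤ) ^ (m + 1) := by have := hp.pos; positivity
    have h1 := S.pow_mem (hU m b hb hw) (z % (p : ℤ) ^ (m + 1)).toNat
    rw [UmaN_eq, phaseMat_pow] at h1
    refine hcongr _ _ h1 fun r => ⟨z / (p : ℤ) ^ (m + 1) * monoFn b r, ?_⟩
    have hk : (((z % (p : ℤ) ^ (m + 1)).toNat : ℕ) : ℝ) = (z : ℝ) -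
        (p : ℝ) ^ (m + 1) * (z / (p : ℤ) ^ (m + 1) : ℤ) := by
      have e1 : (((z % (p : ℤ) ^ (m + 1)).toNat : ℕ) : ℤ) = z -
          (p : ℤ) ^ (m + 1) * (z / (p : ℤ) ^ (m + 1)) := by
        rw [Int.toNat_of_nonneg (Int.emod_nonneg _ hN.ne'), Int.emod_def]
      exact_mod_cast e1
    rw [hk]
    push_cast
    field_simp
    ring
  -- `∏ a_i!` is invertible modulo `p^(m+1)`
  have hbinom : ∀ (m : ℕ) (a : Fin n → ℕ), (∀ i, a i ≤ p - 1) → (p - 1) * m + ∑ i, a i ≤ w →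
      ∀ z : ℤ, phaseMat (fun x => (z : ℝ) * ((binomFn a x : ℝ) / (p : ℝ) ^ (m + 1))) 0 ∈ S := by
    intro m a ha hw z
    obtain ⟨s, hs⟩ := binomFn_expansion (p := p) a
    have hcop : IsCoprime ((∏ i, (a i).factorial : ℕ) : ℤ) ((p : ℤ) ^ (m + 1)) := by
      have : Nat.Coprime (∏ i, (a i).factorial) (p ^ (m + 1)) := by
        refine Nat.Coprime.pow_right _ (Nat.Coprime.prod_left fun i _ => ?_)
        refine (Nat.coprime_comm.1 ((Nat.Prime.coprime_iff_not_dvd hp).2 fun hd => ?_))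
        have := (hp.dvd_factorial).1 hd
        have := ha i
        have := hp.pos
        omega
      have := Nat.isCoprime_iff_coprime.2 this
      exact_mod_cast this
    obtain ⟨u, v, huv⟩ := hcop
    have h1 := hsum (Fintype.piFinset (fun i => Finset.range (a i + 1)))
      (fun b x => ((z * u * s b : ℤ) : ℝ) * ((monoFn b x : ℝ) / (p : ℝ) ^ (m + 1))) (by
        intro b hb
        have hba : ∀ i, b i ≤ a i := fun i => by
          have := Fintype.mem_piFinset.1 hb i
          rw [Finset.mem_range] at this
          omega
        have := Finset.sum_le_sum fun i (_ : i ∈ Finset.univ) => hba i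
        exact hmono m b (fun i => (hba i).trans (ha i)) (by omega) _)
    refine hcongr _ _ h1 fun r => ⟨z * v * binomFn a r, ?_⟩
    have hs' : ((∏ i, (a i).factorial : ℕ) : ℝ) * binomFn a r =
      ∑ b ∈ Fintype.piFinset (fun i => Finset.range (a i + 1)), (s b : ℝ) * monoFn b r := by
      exact_mod_cast hs r
    have huv' : (u : ℝ) * ((∏ i, (a i).factorial : ℕ) : ℝ) + v * (p : ℝ) ^ (m + 1) = 1 := by
      exact_mod_cast huv
    have e : ∑ b ∈ Fintype.piFinset (fun i => Finset.range (a i + 1)),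
        ((z * u * s b : ℤ) : ℝ) * ((monoFn b r : ℝ) / (p : ℝ) ^ (m + 1)) =
        z * u / (p : ℝ) ^ (m + 1) * (((∏ i, (a i).factorial : ℕ) : ℝ) * binomFn a r) := by
      rw [hs', Finset.mul_sum]
      refine Finset.sum_congr rfl fun b _ => ?_
      push_cast
      ring
    rw [e]
    have : (z : ℝ) * ((binomFn a r : ℝ) / (p : ℝ) ^ (m + 1)) = z * ((u : ℝ) *
        ((∏ i, (a i).factorial : ℕ) : ℝ) + v * (p : ℝ) ^ (m + 1)) *
        ((binomFn a r : ℝ) / (p : ℝ) ^ (m + 1)) := by rw [huv', mul_one]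
    rw [this]
    push_cast
    field_simp
    ring
  obtain ⟨c, hc, hden⟩ := hg.expansion hp
  have hgc : g = fun x => ∑ a ∈ Fintype.piFinset (fun _ : Fin n => Finset.range p),
      binomFn a x * c a := funext hc
  rw [hgc]
  refine hsum _ _ fun a ha => ?_
  have hap : ∀ i, a i ≤ p - 1 := fun i => by
    have := Fintype.mem_piFinset.1 ha i
    rw [Finset.mem_range] at this
    omega
  rcases Nat.eq_zero_or_pos (∑ i, a i) with h0 | h0
  · have ha0 : ∀ i, a i = 0 := fun i => by simpa using (Finset.sum_eq_zero_iff.1 h0) i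
    simpa [binomFn, ha0] using hconst (c a)
  · -- the least `m` for which the degree bound makes `p^m` clear the denominator of `c a`
    have hex : ∃ m, w + 1 ≤ ∑ i, a i + m * (p - 1) := by
      refine ⟨w, ?_⟩
      have := Nat.le_mul_of_pos_right w (show 0 < p - 1 by have := hp.two_le; omega)
      omega
    obtain ⟨z, hz⟩ := hden a h0 _ (Nat.find_spec hex)
    rcases hm : Nat.find hex with _ | m
    · rw [hm, pow_zero, one_mul] at hz
      refine hcongr _ _ (hconst 0) fun r => ⟨binomFn a r * z, ?_⟩
      rw [hz]
      push_cast
      ring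
    · have hlt := Nat.find_min hex (show m < Nat.find hex by omega)
      rw [hm] at hz
      have hmem := hbinom m a hap (by rw [mul_comm]; omega) z
      rw [← hz] at hmem
      convert hmem using 2
      funext x
      field_simp

end PhaseMatrices

/-! ### The Clifford hierarchy on generalised permutation matrices -/

section Clifford

variable {p n : ℕ} [NeZero p]

lemma degLT_monoFn_div_of_le (hp : p.Prime) {m w : ℕ} {b : Fin n → ℕ} (hb : ∀ i, b i ≤ p - 1)
    (hw : (p - 1) * m + ∑ i, b i ≤ w) :
    DegLT (w + 1) (fun x : Fin n → ZMod p => (monoFn b x : ℝ) / (p : ℝ) ^ (m + 1)) :=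
  degLT_monoFn hp _ _ b hb (by rw [Nat.mul_succ]; omega)

/-- Every Pauli gate is a translation followed by phases of degree `≤ 1`. -/
lemma exists_phaseMat_of_mem_pauli (hp : p.Prime)
    {P : Matrix (Fin n → ZMod p) (Fin n → ZMod p) ℂ} (hP : P ∈ PauliN p n) :
    ∃ f h, DegLT 2 f ∧ P = phaseMat f h := by
  have hP' : P ∈ Submonoid.closure _ := hP
  induction hP' using Submonoid.closure_induction with
  | mem x hx =>
    rcases hx with (hx | ⟨i, rfl⟩) | ⟨i, rfl⟩
    · obtain ⟨t, ht⟩ := pauliPhase_eq (p := p)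
      refine ⟨fun _ => t, 0, degLT_const t (by norm_num), ?_⟩
      rw [Set.mem_singleton_iff.1 hx, ht, phaseMat_const]
    · exact ⟨_, _, degLT_const 0 (by norm_num), XmatN_eq i⟩
    · refine ⟨_, _, ?_, (ZmatN_eq i).trans (UmaN_eq 1 _)⟩
      refine degLT_monoFn_div_of_le hp (m := 0) (fun j => ?_) (by simp)
      have := hp.two_le
      by_cases hj : j = i
      · subst hj; simp; omega
      · simp [hj]
  | one => exact ⟨fun _ => 0, 0, degLT_const 0 (by norm_num), phaseMat_zero.symm⟩
  | mul x y hx hy ihx ihy =>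
    obtain ⟨f, h, hf, rfl⟩ := ihx hx
    obtain ⟨f', h', hf', rfl⟩ := ihy hy
    refine ⟨_, h + h', hf.add (hf'.shift (-h)), ?_⟩
    rw [phaseMat_mul]
    simp only [sub_eq_add_neg]

/-- The first level of the hierarchy, as a monoid of matrices. -/
noncomputable def cliffOne (p n : ℕ) [NeZero p] :
    Submonoid (Matrix (Fin n → ZMod p) (Fin n → ZMod p) ℂ) where
  carrier := CliffN p n 1
  one_mem' := ⟨0, 1, Submonoid.one_mem _, by simp⟩
  mul_mem' := by
    rintro _ _ ⟨φ, P, hP, rfl⟩ ⟨ψ, Q, hQ, rfl⟩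
    refine ⟨φ + ψ, P * Q, Submonoid.mul_mem _ hP hQ, ?_⟩
    rw [smul_mul_smul_comm, ← Complex.exp_add]
    congr 2
    push_cast
    ring

lemma XmatN_mem_pauli (i : Fin n) : XmatN p n i ∈ PauliN p n :=
  Submonoid.subset_closure (Or.inl (Or.inr ⟨i, rfl⟩))

lemma ZmatN_mem_pauli (i : Fin n) : ZmatN p n i ∈ PauliN p n :=
  Submonoid.subset_closure (Or.inr ⟨i, rfl⟩)

lemma pauli_mem_cliffOne {P : Matrix (Fin n → ZMod p) (Fin n → ZMod p) ℂ}
    (hP : P ∈ PauliN p n) : P ∈ cliffOne p n := ⟨0, P, hP, by simp⟩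

lemma phaseMat_const_mem_cliffOne (c : ℝ) :
    phaseMat (fun _ => c) (0 : Fin n → ZMod p) ∈ cliffOne p n :=
  ⟨2 * Real.pi * c, 1, Submonoid.one_mem _, by rw [phaseMat_const, phase_eq_exp_mul_I]⟩

lemma translation_mem_cliffOne (h : Fin n → ZMod p) :
    phaseMat (fun _ => 0) h ∈ cliffOne p n := by
  have hadd : ∀ u v : Fin n → ZMod p, phaseMat (fun _ => 0) u ∈ cliffOne p n →
      phaseMat (fun _ => 0) v ∈ cliffOne p n → phaseMat (fun _ => 0) (u + v) ∈ cliffOne p n := by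
    intro u v hu hv
    have := (cliffOne p n).mul_mem hu hv
    rw [phaseMat_mul] at this
    simpa using this
  have h0 : phaseMat (fun _ => 0) (0 : Fin n → ZMod p) ∈ cliffOne p n :=
    phaseMat_const_mem_cliffOne 0
  have hsm : ∀ (i : Fin n) (k : ℕ),
      phaseMat (fun _ => 0) (k • (Pi.single i 1 : Fin n → ZMod p)) ∈ cliffOne p n := by
    intro i k
    induction k with
    | zero => simpa using h0
    | succ k ih =>
      rw [succ_nsmul]
      refine hadd _ _ ih ?_
      rw [← XmatN_eq]
      exact pauli_mem_cliffOne (XmatN_mem_pauli i)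
  have hs : ∀ s : Finset (Fin n), phaseMat (fun _ => 0)
      (∑ i ∈ s, (h i).val • (Pi.single i 1 : Fin n → ZMod p)) ∈ cliffOne p n := by
    intro s
    induction s using Finset.induction_on with
    | empty => simpa using h0
    | insert a s ha ih =>
      rw [Finset.sum_insert ha]
      exact hadd _ _ (hsm _ _) ih
  have hh : h = ∑ i, (h i).val • (Pi.single i 1 : Fin n → ZMod p) := by
    funext j
    rw [Finset.sum_apply]
    simp only [Pi.smul_apply, Pi.single_apply, nsmul_eq_mul, ZMod.natCast_val, ZMod.cast_id', id]
    simp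
  rw [hh]
  exact hs _

/-- The gates `U_{m,b}` of weight at most one are Pauli gates up to a phase. -/
lemma UmaN_mem_cliffOne (hp : p.Prime) (m : ℕ) (b : Fin n → ℕ)
    (hw : (p - 1) * m + ∑ i, b i ≤ 1) : UmaN p n (m + 1) b ∈ cliffOne p n := by
  rcases Nat.eq_zero_or_pos (∑ i, b i) with h0 | h0
  · have hb0 : ∀ i, b i = 0 := fun i => by simpa using (Finset.sum_eq_zero_iff.1 h0) i
    rw [UmaN_eq]
    simpa [monoFn, hb0] using phaseMat_const_mem_cliffOne (n := n) (1 / (p : ℝ) ^ (m + 1))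
  · have hm : m = 0 := by
      by_contra hm
      have := Nat.le_mul_of_pos_right (p - 1) (Nat.pos_of_ne_zero hm)
      have := hp.two_le
      omega
    subst hm
    obtain ⟨i, hi⟩ : ∃ i, b i ≠ 0 := by
      by_contra! h
      simp [h] at h0
    have hsplit := Finset.add_sum_erase Finset.univ b (Finset.mem_univ i)
    have hb : b = Pi.single i 1 := by
      funext j
      by_cases hj : j = i
      · subst hj; simp; omega
      · have := Finset.single_le_sum (f := b) (fun _ _ => Nat.zero_le _)
          (Finset.mem_erase.2 ⟨hj, Finset.mem_univ j⟩)
        simp [hj]; omega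
    rw [hb, ← ZmatN_eq]
    exact pauli_mem_cliffOne (ZmatN_mem_pauli i)

/-- A translation followed by phases lies in level `k + 1` of the hierarchy exactly when its phase
function has degree at most `k + 1`: conjugation of `X_i` differentiates the phase function along
`e_i`. -/
lemma phaseMat_mem_cliff_iff (hp : p.Prime) (k : ℕ) (g : (Fin n → ZMod p) → ℝ)
    (h : Fin n → ZMod p) : phaseMat g h ∈ CliffN p n (k + 1) ↔ DegLT (k + 2) g := by
  induction k generalizing g h with
  | zero =>
    constructor
    · rintro ⟨φ, P, hP, e⟩
      obtain ⟨f, h', hf, rfl⟩ := exists_phaseMat_of_mem_pauli hp hP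
      rw [exp_mul_I_eq_phase, smul_phaseMat] at e
      exact ((degLT_const (φ / (2 * Real.pi)) (by norm_num)).add hf).congr (phaseMat_inj e).2
    · intro hg
      have h1 : phaseMat g 0 ∈ cliffOne p n :=
        phaseMat_mem_of_degLT hp _ phaseMat_const_mem_cliffOne
          (fun m b _ hw => UmaN_mem_cliffOne hp m b hw) hg
      have h2 := (cliffOne p n).mul_mem h1 (translation_mem_cliffOne h)
      rw [phaseMat_mul] at h2
      simp only [add_zero, zero_add] at h2
      exact h2
  | succ k ih =>
    constructor
    · rintro ⟨-, hconj⟩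
      refine degLT_succ.2 fun i => ?_
      have := hconj _ (XmatN_mem_pauli i)
      rw [XmatN_eq, phaseMat_conj, ih] at this
      convert this.shift (Pi.single i 1) using 2 with x
      rw [add_sub_cancel_right, add_zero]
    · intro hg
      refine ⟨phaseMat_mem_unitary g h, fun P hP => ?_⟩
      obtain ⟨f, h', hf, rfl⟩ := exists_phaseMat_of_mem_pauli hp hP
      rw [phaseMat_conj, ih]
      have h1 := (hg.diff h').shift (-h')
      have h2 : DegLT (k + 2) f := hf.mono (by omega)
      convert h1.add (h2.shift (-h)) using 2 with x
      simp only [sub_eq_add_neg, neg_add_cancel_right]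

lemma mem_unitary_of_mem_cliff (hp : p.Prime) {k : ℕ}
    {U : Matrix (Fin n → ZMod p) (Fin n → ZMod p) ℂ} (hU : U ∈ CliffN p n (k + 1)) :
    U ∈ Matrix.unitaryGroup (Fin n → ZMod p) ℂ := by
  rcases k with _ | k
  · obtain ⟨φ, P, hP, rfl⟩ := hU
    obtain ⟨f, h, -, rfl⟩ := exists_phaseMat_of_mem_pauli hp hP
    rw [exp_mul_I_eq_phase, smul_phaseMat]
    exact phaseMat_mem_unitary _ _
  · exact hU.1

/-- The diagonal gates of level `k + 1` are those with a phase function of degree at most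
`k + 1`. -/
lemma mem_cliffDN_iff (hp : p.Prime) {k : ℕ}
    {U : Matrix (Fin n → ZMod p) (Fin n → ZMod p) ℂ} :
    U ∈ CliffDN p n (k + 1) ↔ ∃ g, DegLT (k + 2) g ∧ U = phaseMat g 0 := by
  constructor
  · rintro ⟨hU, hd⟩
    have hun := Matrix.mem_unitaryGroup_iff.1 (mem_unitary_of_mem_cliff hp hU)
    have hent : ∀ r, ∃ t, U r r = phase t := by
      intro r
      apply exists_phase
      have := congrFun (congrFun hun r) r
      rw [Matrix.mul_apply, Finset.sum_eq_single r] at this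
      · simpa using this
      · intro b _ hb
        rw [hd hb.symm, zero_mul]
      · simp
    choose g hg using hent
    have hUg : U = phaseMat g 0 := by
      ext r c
      rw [phaseMat_apply, add_zero]
      split_ifs with e
      · rw [← e, hg]
      · exact hd e
    refine ⟨g, ?_, hUg⟩
    rwa [hUg, phaseMat_mem_cliff_iff hp] at hU
  · rintro ⟨g, hg, rfl⟩
    refine ⟨(phaseMat_mem_cliff_iff hp k g 0).2 hg, fun r c hrc => ?_⟩
    change phaseMat g 0 r c = 0
    rw [phaseMat_apply, add_zero, if_neg hrc]

end Clifford

/-! ### The groups `D_{m,a}` and `D_w` -/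

section Dgroups

variable {p n : ℕ} [NeZero p]

/-- The diagonal gates whose phase functions have degree `< k`. -/
noncomputable def degGates (p n : ℕ) [NeZero p] (k : ℕ) :
    Submonoid (Matrix (Fin n → ZMod p) (Fin n → ZMod p) ℂ) where
  carrier := {U | ∃ g, DegLT k g ∧ U = phaseMat g 0}
  one_mem' := ⟨fun _ => 0, .of_int (fun _ => ⟨0, by simp⟩) k, phaseMat_zero.symm⟩
  mul_mem' := by
    rintro _ _ ⟨g, hg, rfl⟩ ⟨g', hg', rfl⟩
    exact ⟨_, hg.add hg', by rw [phaseMat_mul]; simp⟩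

/-- The degree bound on `D_{m,a}`; the hypothesis says `(p - 1)(m - 1) + wt(a) < k`, written so as to
make sense for `m = 0`. -/
lemma dgrpN_subset_degGates (hp : p.Prime) (m : ℕ) (a : Fin n → ℕ) (ha : ∀ i, a i ≤ p - 1)
    (k : ℕ) (hk1 : 1 ≤ k) (hk : (p - 1) * m + ∑ i, a i < k + (p - 1)) :
    DgrpN p n m a ⊆ degGates p n k := by
  induction m generalizing a with
  | zero =>
    intro U hU
    rw [DgrpN] at hU
    obtain ⟨φ, rfl⟩ := hU
    exact ⟨_, degLT_const (φ / (2 * Real.pi)) hk1, by rw [phaseMat_const, exp_mul_I_eq_phase]⟩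
  | succ m ihm =>
    obtain ⟨N, hN⟩ : ∃ N, ∑ i, a i = N := ⟨_, rfl⟩
    induction N using Nat.strong_induction_on generalizing a with
    | _ N ihN =>
      intro U hU
      rw [DgrpN] at hU
      obtain ⟨G, hG, φ, D, hD, E, hE, rfl⟩ := hU
      have h1 : G ∈ degGates p n k := by
        refine (Submonoid.closure_le (S := degGates p n k)).2 ?_ hG
        rintro _ rfl
        exact ⟨_, degLT_monoFn hp k (m + 1) a ha hk, UmaN_eq _ _⟩
      have h2 : D ∈ degGates p n k := by
        refine (Submonoid.closure_le (S := degGates p n k)).2 ?_ hD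
        refine Set.iUnion₂_subset fun b hb => ?_
        have hb2 : ∑ i, b i < ∑ i, a i := hb.2
        exact ihN _ (hN ▸ hb.2) b (fun i => (hb.1 i).trans (ha i)) (by omega) rfl
      have h3 : E ∈ degGates p n k := by
        refine (Submonoid.closure_le (S := degGates p n k)).2 ?_ hE
        refine Set.iUnion₂_subset fun c hc => ?_
        have hc2 : ∑ i, c i ≤ ∑ i, a i + (p - 1) := hc.2
        refine ihm c (fun i => (hc.1 i).2) ?_
        rw [Nat.mul_succ] at hk
        omega
      have h4 : Complex.exp (φ * Complex.I) • (1 : Matrix (Fin n → ZMod p) (Fin n → ZMod p) ℂ)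
          ∈ degGates p n k :=
        ⟨_, degLT_const (φ / (2 * Real.pi)) hk1, by rw [phaseMat_const, exp_mul_I_eq_phase]⟩
      have h5 := Submonoid.mul_mem _ h4 (Submonoid.mul_mem _ (Submonoid.mul_mem _ h1 h2) h3)
      rwa [smul_mul_assoc, one_mul] at h5

lemma UmaN_mem_dgrpN (m : ℕ) (a : Fin n → ℕ) : UmaN p n (m + 1) a ∈ DgrpN p n (m + 1) a := by
  rw [DgrpN]
  exact ⟨_, Submonoid.subset_closure rfl, 0, 1, Submonoid.one_mem _, 1, Submonoid.one_mem _,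
    by simp⟩

lemma phaseMat_const_mem_dgrpN (m : ℕ) (a : Fin n → ℕ) (c : ℝ) :
    phaseMat (fun _ => c) 0 ∈ DgrpN p n (m + 1) a := by
  rw [DgrpN]
  exact ⟨1, Submonoid.one_mem _, 2 * Real.pi * c, 1, Submonoid.one_mem _, 1,
    Submonoid.one_mem _, by rw [phaseMat_const, phase_eq_exp_mul_I]; simp⟩

lemma dgrpN_subset_of_le (m : ℕ) {a b : Fin n → ℕ} (hba : ∀ i, b i ≤ a i)
    (hlt : ∑ i, b i < ∑ i, a i) : DgrpN p n (m + 1) b ⊆ DgrpN p n (m + 1) a := by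
  intro W hW
  rw [DgrpN]
  exact ⟨1, Submonoid.one_mem _, 0, W, Submonoid.subset_closure
    (Set.mem_iUnion₂.2 ⟨b, ⟨hba, hlt⟩, hW⟩), 1, Submonoid.one_mem _, by simp⟩

lemma dgrpN_subset_succ (m : ℕ) {a c : Fin n → ℕ} (hc : ∀ i, 1 ≤ c i ∧ c i ≤ p - 1)
    (hle : ∑ i, c i ≤ ∑ i, a i + (p - 1)) : DgrpN p n m c ⊆ DgrpN p n (m + 1) a := by
  intro W hW
  rw [DgrpN]
  exact ⟨1, Submonoid.one_mem _, 0, 1, Submonoid.one_mem _, W, Submonoid.subset_closure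
    (Set.mem_iUnion₂.2 ⟨c, ⟨hc, hle⟩, hW⟩), by simp⟩

lemma dgrpN_subset_Dw {w m : ℕ} {a : Fin n → ℕ} (ha : ∀ i, a i ≤ p - 1)
    (hw : (p - 1) * m + ∑ i, a i = w) : DgrpN p n (m + 1) a ⊆ Dw p n w := by
  intro U hU
  exact Submonoid.subset_closure
    (Set.mem_iUnion₂.2 ⟨(m + 1, a), ⟨by simp, ha, by simpa using hw⟩, hU⟩)

/-- If some `a_i < p - 1`, then `D_{m,a} ⊆ D_{m,a + e_i}`; otherwise `a = (p - 1, …, p - 1)`, and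
`D_{m,a}` is one of the factors `D_{m,c}` of `D_{m + 1,a'}` where `a'` is `a` with an entry replaced
by `1`. Both raise the weight by one. -/
lemma Dw_subset_succ (hp : p.Prime) (hn : 1 ≤ n) (w : ℕ) : Dw p n w ⊆ Dw p n (w + 1) := by
  have h2 := hp.two_le
  refine (Submonoid.closure_le (S := Submonoid.closure _)).2 (Set.iUnion₂_subset ?_)
  rintro ⟨m', a⟩ ⟨hm, ha, hw⟩
  obtain ⟨m, rfl⟩ : ∃ m, m' = m + 1 := ⟨m' - 1, by simp only at hm; omega⟩
  simp only [Nat.add_sub_cancel] at ha hw ⊢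
  by_cases hex : ∃ i, a i < p - 1
  · obtain ⟨i, hi⟩ := hex
    have hs := sum_update_add a i (a i + 1)
    refine (dgrpN_subset_of_le m (a := Function.update a i (a i + 1)) (fun j => ?_)
      (by omega)).trans (dgrpN_subset_Dw (fun j => ?_) (by omega))
    · by_cases hj : j = i
      · subst hj; simp
      · simp [hj]
    · by_cases hj : j = i
      · subst hj; simpa using hi
      · simpa [hj] using ha j
  · have hall : ∀ i, a i = p - 1 := fun i =>
      le_antisymm (ha i) (not_lt.1 fun h => hex ⟨i, h⟩)
    have hs := sum_update_add a ⟨0, hn⟩ 1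
    have h0 := hall ⟨0, hn⟩
    refine (dgrpN_subset_succ (m + 1) (a := Function.update a ⟨0, hn⟩ 1)
      (fun j => ⟨by rw [hall]; omega, ha j⟩) (by omega)).trans
      (dgrpN_subset_Dw (fun j => ?_) (by rw [Nat.mul_succ]; omega))
    by_cases hj : j = ⟨0, hn⟩
    · subst hj; simp; omega
    · simpa [hj] using ha j

lemma Dw_mono (hp : p.Prime) (hn : 1 ≤ n) : Monotone (Dw p n) :=
  monotone_nat_of_le_succ (Dw_subset_succ hp hn)

lemma Dw_eq_degGates (hp : p.Prime) (hn : 1 ≤ n) (w : ℕ) :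
    Dw p n w = degGates p n (w + 1) := by
  apply Set.Subset.antisymm
  · refine (Submonoid.closure_le (S := degGates p n (w + 1))).2 (Set.iUnion₂_subset ?_)
    rintro ⟨m', a⟩ ⟨hm, ha, hw⟩
    obtain ⟨m, rfl⟩ : ∃ m, m' = m + 1 := ⟨m' - 1, by simp only at hm; omega⟩
    simp only [Nat.add_sub_cancel] at ha hw ⊢
    exact dgrpN_subset_degGates hp _ _ ha _ (by omega) (by rw [Nat.mul_succ]; omega)
  · rintro _ ⟨g, hg, rfl⟩
    refine phaseMat_mem_of_degLT hp (w := w) (Submonoid.closure _) (fun c => ?_)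
      (fun m b hb hw => ?_) hg
    · exact Dw_mono hp hn (Nat.zero_le w) (dgrpN_subset_Dw (m := 0) (a := fun _ => 0)
        (fun _ => Nat.zero_le _) (by simp) (phaseMat_const_mem_dgrpN 0 _ c))
    · exact Dw_mono hp hn hw (dgrpN_subset_Dw hb rfl (UmaN_mem_dgrpN m b))

end Dgroups

/-- For `n` qudits of prime dimension `p` and every `w ≥ 1`, the group
`D_w` equals the set `C^w_d` of diagonal gates in the `w`-th level of the Clifford
hierarchy. -/
theorem Dw_eq_diagonal_clifford (p n w : ℕ) [NeZero p] (hp : p.Prime) (hn : 1 ≤ n)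
    (hw : 1 ≤ w) :
    Dw p n w = CliffDN p n w := by
  obtain ⟨k, rfl⟩ : ∃ k, w = k + 1 := ⟨w - 1, by omega⟩
  rw [Dw_eq_degGates hp hn]
  ext U
  exact (mem_cliffDN_iff hp).symm
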